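/- For every positive integer x, S_{17,0}(2^{17}·x) = 34·S_{17,0}(2^{9}·x) − 17·S_{17,0}(2·x); in particular, for every natural number n, S_{17,0}(2^{n+17}) = 34·S_{17,0}(2^{n+9}) − 17·S_{17,0}(2^{n+1}). -/

import Mathlib

/-!
Let `T z x = ∑ n < x, (-1) ^ s n * z ^ n`. Splitting by the last binary digit gives
`T z (2 * x) = (1 - z) * T (z ^ 2) x`, so if `z ^ 17 = 1` then, as `2 ^ 8 ≡ 1 (mod 17)`,
passing from `x` to `2 ^ 8 * x` multiplies `T z x` by `P = ∏ i < 8, (1 - z ^ 2 ^ i)`.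
The exponents `2 ^ i` run through the quadratic residues modulo `17`. Up to multiples of
`1 + z + ⋯ + z ^ 16`, which `1 - z` kills, the Gaussian period `η` of the residues satisfies
`η ^ 2 + η = 4` and `P = 13 - 8 * η`, whence `P ^ 2 = 34 * P - 17`. Since `T z (2 * x)` is a
multiple of `1 - z`, this proves the recursion for `T z`, and taking `z` to be the generator of the
group ring `ℤ[ℤ/17]` and comparing coefficients proves it for each residue class.
-/

/-- `s n` is the number of 1's in the binary expansion of `n`. -/
def s (n : ℕ) : ℕ := (Nat.digits 2 n).sum

/-- Newman-like sum `S_{m,a}(x) = Σ_{0 ≤ n < x, n ≡ a (mod m)} (−1)^{s(n)}`. -/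
def S (m a x : ℕ) : ℤ :=
  ∑ n ∈ (Finset.range x).filter (fun n => n % m = a), (-1 : ℤ) ^ (s n)

open Finset

lemma s_two_mul (n : ℕ) : s (2 * n) = s n := by
  rcases n.eq_zero_or_pos with rfl | hn
  · rfl
  · simp [s, Nat.digits_base_mul one_lt_two hn]

lemma s_two_mul_add_one (n : ℕ) : s (2 * n + 1) = s n + 1 := by
  rw [s, add_comm, Nat.digits_add 2 one_lt_two 1 n one_lt_two (.inl one_ne_zero),
    List.sum_cons, add_comm, s]

section ThueMorse

variable {R : Type*} [CommRing R]

/-- The generating polynomial `∑ n < x, (-1) ^ s n * z ^ n` of the Thue–Morse signs, evaluated at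
`z`. At a root of unity it collects the sums `S m a x` over all residue classes `a`. -/
def thueMorseSum (z : R) (x : ℕ) : R := ∑ n ∈ range x, (-1) ^ s n * z ^ n

lemma thueMorseSum_two_mul (z : R) (x : ℕ) :
    thueMorseSum z (2 * x) = (1 - z) * thueMorseSum (z ^ 2) x := by
  induction x with
  | zero => simp [thueMorseSum]
  | succ x ih =>
    simp only [thueMorseSum] at ih ⊢
    rw [mul_add_one, sum_range_succ, sum_range_succ, sum_range_succ, ih, s_two_mul,
      s_two_mul_add_one]
    ring

lemma thueMorseSum_two_pow_mul (z : R) (k x : ℕ) :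
    thueMorseSum z (2 ^ k * x) =
      (∏ i ∈ range k, (1 - z ^ 2 ^ i)) * thueMorseSum (z ^ 2 ^ k) x := by
  induction k generalizing x with
  | zero => simp
  | succ k ih =>
    rw [pow_succ, mul_assoc, ih, thueMorseSum_two_mul, prod_range_succ, ← pow_mul, mul_assoc]

/-- The Gaussian period `∑ z ^ r` over the quadratic residues `r` modulo `17`, for `z ^ 17 = 1`.
The residues are enumerated as the powers of `2`. -/
def quadraticPeriod (z : R) : R := ∑ i ∈ range 8, z ^ 2 ^ i

variable {z : R}

lemma quadraticPeriod_sq (hz : z ^ 17 = 1) :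
    quadraticPeriod z ^ 2 = 4 - quadraticPeriod z + 4 * ∑ i ∈ range 17, z ^ i := by
  simp only [quadraticPeriod, sum_range_succ, sum_range_zero]
  grind

lemma prod_one_sub_eq_quadraticPeriod (hz : z ^ 17 = 1) :
    ∏ i ∈ range 8, (1 - z ^ 2 ^ i) =
      13 - 8 * quadraticPeriod z + 3 * ∑ i ∈ range 17, z ^ i := by
  simp only [quadraticPeriod, sum_range_succ, sum_range_zero, prod_range_succ, prod_range_zero]
  grind

lemma one_sub_mul_prod_one_sub_sq (hz : z ^ 17 = 1) :
    (1 - z) * (∏ i ∈ range 8, (1 - z ^ 2 ^ i)) ^ 2 =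
      (1 - z) * (34 * ∏ i ∈ range 8, (1 - z ^ 2 ^ i) - 17) := by
  have hgeom : (1 - z) * ∑ i ∈ range 17, z ^ i = 0 := by
    rw [mul_neg_geom_sum, hz, sub_self]
  rw [prod_one_sub_eq_quadraticPeriod hz]
  set η := quadraticPeriod z
  set N := ∑ i ∈ range 17, z ^ i
  linear_combination 64 * (1 - z) * quadraticPeriod_sq hz +
    (6 * (13 - 8 * η) + 9 * N + 154) * hgeom

lemma thueMorseSum_seventeen_recursion (hz : z ^ 17 = 1) (x : ℕ) :
    thueMorseSum z (2 ^ 17 * x) =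
      34 * thueMorseSum z (2 ^ 9 * x) - 17 * thueMorseSum z (2 * x) := by
  have hpow : z ^ 2 ^ 8 = z := by
    rw [show 2 ^ 8 = 17 * 15 + 1 by norm_num, pow_succ, pow_mul, hz, one_pow, one_mul]
  have hmul (y : ℕ) :
      thueMorseSum z (2 ^ 8 * y) = (∏ i ∈ range 8, (1 - z ^ 2 ^ i)) * thueMorseSum z y := by
    rw [thueMorseSum_two_pow_mul, hpow]
  rw [show 2 ^ 17 * x = 2 ^ 8 * (2 ^ 8 * (2 * x)) by ring,
    show 2 ^ 9 * x = 2 ^ 8 * (2 * x) by ring, hmul, hmul, thueMorseSum_two_mul]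
  linear_combination thueMorseSum (z ^ 2) x * one_sub_mul_prod_one_sub_sq hz

end ThueMorse

open AddMonoidAlgebra (single single_pow smul_single coeff_single coeff_sum coeff_sub
  coeff_smul_apply)

lemma coeff_thueMorseSum_single {m a : ℕ} (ha : a < m) (x : ℕ) :
    (thueMorseSum (single (1 : ZMod m) (1 : ℤ)) x).coeff (a : ZMod m) = S m a x := by
  have hterm (n : ℕ) : (-1) ^ s n * single (1 : ZMod m) (1 : ℤ) ^ n =
      single (n : ZMod m) ((-1) ^ s n) := by
    rw [single_pow, one_pow, nsmul_one,
      show (-1 : AddMonoidAlgebra ℤ (ZMod m)) ^ s n = ((-1 : ℤ) ^ s n : ℤ) by push_cast; rfl,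
      ← zsmul_eq_mul, smul_single, smul_eq_mul, mul_one]
  have hcast (n : ℕ) : (n : ZMod m) = a ↔ n % m = a := by
    rw [ZMod.natCast_eq_natCast_iff', Nat.mod_eq_of_lt ha]
  simp only [thueMorseSum, hterm, coeff_sum, Finsupp.finsetSum_apply,
    coeff_single, Finsupp.single_apply, hcast, S, sum_filter]

theorem S_seventeen_recursion_general {a : ℕ} (ha : a < 17) (x : ℕ) :
    S 17 a (2 ^ 17 * x) = 34 * S 17 a (2 ^ 9 * x) - 17 * S 17 a (2 * x) := by
  have hz : single (1 : ZMod 17) (1 : ℤ) ^ 17 = 1 := by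
    rw [single_pow, one_pow, AddMonoidAlgebra.one_def]
    rfl
  have hrec := thueMorseSum_seventeen_recursion hz x
  rw [← Int.cast_ofNat 34, ← Int.cast_ofNat 17, ← zsmul_eq_mul, ← zsmul_eq_mul] at hrec
  simpa only [coeff_sub, Finsupp.sub_apply, coeff_smul_apply,
    smul_eq_mul, coeff_thueMorseSum_single ha] using
      congrArg (fun f ↦ f.coeff (a : ZMod 17)) hrec

/-- Formulas (34)-(35): `S_{17,0}(2^{17}x) = 34 S_{17,0}(2^9 x) − 17 S_{17,0}(2x)`
for every positive integer `x`; in particular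
`S_{17,0}(2^{n+17}) = 34 S_{17,0}(2^{n+9}) − 17 S_{17,0}(2^{n+1})` for all `n`. -/
theorem S_seventeen_recursion :
    (∀ x : ℕ, 0 < x →
      S 17 0 (2 ^ 17 * x) = 34 * S 17 0 (2 ^ 9 * x) - 17 * S 17 0 (2 * x)) ∧
    (∀ n : ℕ,
      S 17 0 (2 ^ (n + 17)) = 34 * S 17 0 (2 ^ (n + 9)) - 17 * S 17 0 (2 ^ (n + 1))) := by
  refine ⟨fun x _ ↦ S_seventeen_recursion_general (by norm_num) x, fun n ↦ ?_⟩
  simpa only [← pow_succ', ← pow_add, add_comm _ n] using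
    S_seventeen_recursion_general (a := 0) (by norm_num) (2 ^ n)
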